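/- Let γ : ℝ → ℝ² be a smooth regular plane curve parametrised by arc length with curvature κ, and let S ∈ ℝ satisfy −κ''(s) = 2S ⟨γ'(s), γ(s)⟩ for all s. Suppose that for all sequences (p_i) with p_i → −∞ and (q_i) with q_i → +∞, one has (κ(q_i)κ'(q_i) − 2S⟨ν(q_i), γ(q_i)⟩) − (κ(p_i)κ'(p_i) − 2S⟨ν(p_i), γ(p_i)⟩) → 0 as i → ∞. Then κ' ≡ 0, i.e. κ is constant; if moreover γ is not periodic (there is no P > 0 with γ(s+P) = γ(s) for all s), then γ is a straight line: γ(s) = γ(0) + s γ'(0). -/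

import Mathlib

open Real MeasureTheory Filter

/-- Euclidean inner product on `ℝ × ℝ`. -/
def innerP (a b : ℝ × ℝ) : ℝ := a.1 * b.1 + a.2 * b.2

/-- Unit normal `ν = (y', -x')` of a plane curve parametrised by arc length. -/
noncomputable def nuA (γ : ℝ → ℝ × ℝ) (s : ℝ) : ℝ × ℝ :=
  ((deriv γ s).2, -(deriv γ s).1)

/-- Curvature `κ = ⟨γ'', ν⟩` of a plane curve parametrised by arc length. -/
noncomputable def curvA (γ : ℝ → ℝ × ℝ) (s : ℝ) : ℝ :=
  innerP (deriv (deriv γ) s) (nuA γ s)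

/-- A function with derivative `g ^ 2` whose increments between sequences tending to `-∞` and `+∞`
tend to zero has `g = 0`. -/
theorem eq_zero_of_hasDerivAt_sq_of_tendsto {F g : ℝ → ℝ} (hF : ∀ s, HasDerivAt F (g s ^ 2) s)
    (hlim : ∀ p q : ℕ → ℝ, Tendsto p atTop atBot → Tendsto q atTop atTop →
      Tendsto (fun i => F (q i) - F (p i)) atTop (nhds 0)) (s : ℝ) : g s = 0 := by
  have hmono : Monotone F := monotone_of_deriv_nonneg (fun s => (hF s).differentiableAt)
    fun s => (hF s).deriv ▸ sq_nonneg (g s)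
  have hq : Tendsto (fun i : ℕ => (i : ℝ)) atTop atTop := tendsto_natCast_atTop_atTop
  have hlim' := hlim _ _ (tendsto_neg_atTop_atBot.comp hq) hq
  have hle : ∀ a b, F b - F a ≤ 0 := fun a b => by
    refine ge_of_tendsto hlim' ?_
    filter_upwards [hq.eventually_ge_atTop b, hq.eventually_ge_atTop (-a)] with i hb ha
    exact sub_le_sub (hmono hb) (hmono (neg_le.mp ha))
  have hconst : F = fun _ => F 0 :=
    funext fun t => le_antisymm (sub_nonpos.mp (hle 0 t)) (sub_nonpos.mp (hle t 0))
  have h0 := hF s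
  rw [hconst] at h0
  exact pow_eq_zero_iff two_ne_zero |>.mp (h0.unique (hasDerivAt_const s (F 0)))

section ArcLength

variable {γ : ℝ → ℝ × ℝ}

theorem hasDerivAt_fst {f : ℝ → ℝ × ℝ} {f' : ℝ × ℝ} {s : ℝ} (hf : HasDerivAt f f' s) :
    HasDerivAt (fun t => (f t).1) f'.1 s :=
  (ContinuousLinearMap.fst ℝ ℝ ℝ).hasFDerivAt.comp_hasDerivAt s hf

theorem hasDerivAt_snd {f : ℝ → ℝ × ℝ} {f' : ℝ × ℝ} {s : ℝ} (hf : HasDerivAt f f' s) :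
    HasDerivAt (fun t => (f t).2) f'.2 s :=
  (ContinuousLinearMap.snd ℝ ℝ ℝ).hasFDerivAt.comp_hasDerivAt s hf

theorem contDiff_deriv_of_smooth {E : Type*} [NormedAddCommGroup E] [NormedSpace ℝ E] {f : ℝ → E}
    (hf : ContDiff ℝ (⊤ : ℕ∞) f) : ContDiff ℝ (⊤ : ℕ∞) (deriv f) :=
  (contDiff_infty_iff_deriv.mp hf).2

theorem hasDerivAt_of_smooth {E : Type*} [NormedAddCommGroup E] [NormedSpace ℝ E] {f : ℝ → E}
    (hf : ContDiff ℝ (⊤ : ℕ∞) f) (s : ℝ) : HasDerivAt f (deriv f s) s :=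
  ((contDiff_infty_iff_deriv.mp hf).1 s).hasDerivAt

theorem contDiff_curvA (hγ : ContDiff ℝ (⊤ : ℕ∞) γ) : ContDiff ℝ (⊤ : ℕ∞) (curvA γ) := by
  have h1 := contDiff_deriv_of_smooth hγ
  have h2 := contDiff_deriv_of_smooth h1
  unfold curvA innerP nuA
  fun_prop

/-- The Frenet equation `γ'' = κ ν`. -/
theorem deriv_deriv_eq_curvA_smul_nuA (hγ : ContDiff ℝ (⊤ : ℕ∞) γ)
    (hunit : ∀ s, (deriv γ s).1 ^ 2 + (deriv γ s).2 ^ 2 = 1) (s : ℝ) :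
    deriv (deriv γ) s = curvA γ s • nuA γ s := by
  have h := hasDerivAt_of_smooth (contDiff_deriv_of_smooth hγ) s
  have horth := (((hasDerivAt_fst h).pow 2).add ((hasDerivAt_snd h).pow 2)).unique
    ((hasDerivAt_const s (1 : ℝ)).congr_of_eventuallyEq (Eventually.of_forall hunit))
  have hu := hunit s
  simp only [Nat.cast_ofNat, Nat.add_one_sub_one, pow_one] at horth
  ext <;> simp only [curvA, innerP, nuA, Prod.smul_fst, Prod.smul_snd, smul_eq_mul]
  · linear_combination (-(deriv (deriv γ) s).1) * hu + (deriv γ s).1 / 2 * horth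
  · linear_combination (-(deriv (deriv γ) s).2) * hu + (deriv γ s).2 / 2 * horth

theorem hasDerivAt_tangent (hγ : ContDiff ℝ (⊤ : ℕ∞) γ)
    (hunit : ∀ s, (deriv γ s).1 ^ 2 + (deriv γ s).2 ^ 2 = 1) (s : ℝ) :
    HasDerivAt (deriv γ) (curvA γ s • nuA γ s) s :=
  deriv_deriv_eq_curvA_smul_nuA hγ hunit s ▸ hasDerivAt_of_smooth (contDiff_deriv_of_smooth hγ) s

/-- The Frenet equation `ν' = -κ γ'`. -/
theorem hasDerivAt_nuA (hγ : ContDiff ℝ (⊤ : ℕ∞) γ)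
    (hunit : ∀ s, (deriv γ s).1 ^ 2 + (deriv γ s).2 ^ 2 = 1) (s : ℝ) :
    HasDerivAt (nuA γ) (-curvA γ s • deriv γ s) s := by
  have h := hasDerivAt_tangent hγ hunit s
  refine HasDerivAt.congr_deriv (f := nuA γ) ((hasDerivAt_snd h).prodMk (hasDerivAt_fst h).neg) ?_
  ext <;> simp [nuA]

theorem hasDerivAt_innerP {f g : ℝ → ℝ × ℝ} {f' g' : ℝ × ℝ} {s : ℝ} (hf : HasDerivAt f f' s)
    (hg : HasDerivAt g g' s) :
    HasDerivAt (fun t => innerP (f t) (g t)) (innerP f' (g s) + innerP (f s) g') s := by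
  refine (((hasDerivAt_fst hf).mul (hasDerivAt_fst hg)).add
    ((hasDerivAt_snd hf).mul (hasDerivAt_snd hg))).congr_deriv ?_
  simp only [innerP]
  ring

/-- Along a rotator, `κ κ' - 2 S ⟨ν, γ⟩` has derivative `κ' ^ 2`. -/
theorem hasDerivAt_rotator_quantity (hγ : ContDiff ℝ (⊤ : ℕ∞) γ)
    (hunit : ∀ s, (deriv γ s).1 ^ 2 + (deriv γ s).2 ^ 2 = 1) {S : ℝ}
    (hrot : ∀ s, -(deriv (deriv (curvA γ)) s) = 2 * S * innerP (deriv γ s) (γ s)) (s : ℝ) :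
    HasDerivAt (fun t => curvA γ t * deriv (curvA γ) t - 2 * S * innerP (nuA γ t) (γ t))
      (deriv (curvA γ) s ^ 2) s := by
  have hκ := contDiff_curvA hγ
  refine (((hasDerivAt_of_smooth hκ s).mul
    (hasDerivAt_of_smooth (contDiff_deriv_of_smooth hκ) s)).sub
    ((hasDerivAt_innerP (hasDerivAt_nuA hγ hunit s) (hasDerivAt_of_smooth hγ s)).const_mul
      (2 * S))).congr_deriv ?_
  have hr := hrot s
  simp only [innerP, nuA, Prod.smul_fst, Prod.smul_snd, smul_eq_mul] at hr ⊢
  linear_combination (-curvA γ s) * hr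

theorem eq_of_hasDerivAt_zero {E : Type*} [NormedAddCommGroup E] [NormedSpace ℝ E] {f : ℝ → E}
    (hf : ∀ s, HasDerivAt f 0 s) (s t : ℝ) : f s = f t :=
  is_const_of_deriv_eq_zero (fun u => (hf u).differentiableAt) (fun u => (hf u).deriv) s t

/-- A curve of zero curvature is a straight line. -/
theorem eq_line_of_curvA_eq_zero (hγ : ContDiff ℝ (⊤ : ℕ∞) γ)
    (hunit : ∀ s, (deriv γ s).1 ^ 2 + (deriv γ s).2 ^ 2 = 1) (hκ : ∀ s, curvA γ s = 0) (s : ℝ) :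
    γ s = γ 0 + s • deriv γ 0 := by
  have hT : ∀ t, deriv γ t = deriv γ 0 := fun t =>
    eq_of_hasDerivAt_zero
      (fun u => by simpa [hκ u] using hasDerivAt_tangent hγ hunit u) t 0
  have hline : ∀ t, HasDerivAt (fun u => γ u - u • deriv γ 0) 0 t := fun t =>
    ((hasDerivAt_of_smooth hγ t).sub ((hasDerivAt_id t).smul_const (deriv γ 0))).congr_deriv
      (by simp [hT t])
  have h := eq_of_hasDerivAt_zero hline s 0
  rw [zero_smul, sub_zero] at h
  exact sub_eq_iff_eq_add.mp h

/-- The solutions of `a' = k b`, `b' = -k a` are rotations of their initial values. -/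
theorem rotation_of_hasDerivAt {a b : ℝ → ℝ} {k : ℝ} (ha : ∀ s, HasDerivAt a (k * b s) s)
    (hb : ∀ s, HasDerivAt b (-(k * a s)) s) (s : ℝ) :
    a s = a 0 * cos (k * s) + b 0 * sin (k * s) ∧
      b s = b 0 * cos (k * s) - a 0 * sin (k * s) := by
  have hk : ∀ t, HasDerivAt (fun u => k * u) k t := fun t => by
    simpa using (hasDerivAt_id t).const_mul k
  have hA := eq_of_hasDerivAt_zero (fun t => (((ha t).mul (hk t).cos).sub
    ((hb t).mul (hk t).sin)).congr_deriv (by ring)) s 0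
  have hB := eq_of_hasDerivAt_zero (fun t => (((ha t).mul (hk t).sin).add
    ((hb t).mul (hk t).cos)).congr_deriv (by ring)) s 0
  simp only [Pi.sub_apply, Pi.add_apply, Pi.mul_apply, mul_zero, cos_zero, sin_zero, mul_one,
    sub_zero, zero_add] at hA hB
  have hcs := sin_sq_add_cos_sq (k * s)
  constructor
  · linear_combination (-a s) * hcs + cos (k * s) * hA + sin (k * s) * hB
  · linear_combination (-b s) * hcs + cos (k * s) * hB - sin (k * s) * hA

/-- A curve of constant nonzero curvature is periodic. -/
theorem periodic_of_curvA_eq_const (hγ : ContDiff ℝ (⊤ : ℕ∞) γ)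
    (hunit : ∀ s, (deriv γ s).1 ^ 2 + (deriv γ s).2 ^ 2 = 1) {k : ℝ} (hk : k ≠ 0)
    (hκ : ∀ s, curvA γ s = k) : ∃ P : ℝ, 0 < P ∧ ∀ s, γ (s + P) = γ s := by
  have hrot := rotation_of_hasDerivAt (k := k)
    (fun s => by simpa [hκ s, nuA] using hasDerivAt_fst (hasDerivAt_tangent hγ hunit s))
    (fun s => by simpa [hκ s, nuA] using hasDerivAt_snd (hasDerivAt_tangent hγ hunit s))
  have hcenter : ∀ s, HasDerivAt (fun t => γ t + k⁻¹ • nuA γ t) 0 s := fun s =>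
    ((hasDerivAt_of_smooth hγ s).add ((hasDerivAt_nuA hγ hunit s).const_smul k⁻¹)).congr_deriv
      (by simp [hκ s, smul_smul, hk])
  have hcos : ∀ s, cos (k * (s + 2 * π / |k|)) = cos (k * s) ∧
      sin (k * (s + 2 * π / |k|)) = sin (k * s) := fun s => by
    rcases abs_choice k with h | h <;> rw [h]
    · rw [show k * (s + 2 * π / k) = k * s + 2 * π by field_simp]
      exact ⟨cos_add_two_pi _, sin_add_two_pi _⟩
    · rw [show k * (s + 2 * π / -k) = k * s - 2 * π by field_simp; ring]
      exact ⟨cos_sub_two_pi _, sin_sub_two_pi _⟩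
  refine ⟨2 * π / |k|, div_pos two_pi_pos (abs_pos.mpr hk), fun s => ?_⟩
  have hν : nuA γ (s + 2 * π / |k|) = nuA γ s := by
    simp only [nuA]
    rw [(hrot (s + 2 * π / |k|)).1, (hrot (s + 2 * π / |k|)).2, (hcos s).1, (hcos s).2,
      ← (hrot s).1, ← (hrot s).2]
  have h := eq_of_hasDerivAt_zero hcenter (s + 2 * π / |k|) s
  rw [hν] at h
  exact add_right_cancel h

end ArcLength

/-- an open rotator for the curve diffusion flow satisfying the decay
condition at infinity has constant curvature; if moreover it is not periodic,
it is a straight line. -/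
theorem open_rotator_with_decay
    (γ : ℝ → ℝ × ℝ)
    (hsmooth : ContDiff ℝ (⊤ : ℕ∞) γ)
    (hunit : ∀ s, (deriv γ s).1 ^ 2 + (deriv γ s).2 ^ 2 = 1)
    (S : ℝ)
    (hrot : ∀ s, -(deriv (deriv (curvA γ)) s) = 2 * S * innerP (deriv γ s) (γ s))
    (hdecay : ∀ p q : ℕ → ℝ, Filter.Tendsto p Filter.atTop Filter.atBot →
      Filter.Tendsto q Filter.atTop Filter.atTop →
      Filter.Tendsto (fun i =>
        (curvA γ (q i) * deriv (curvA γ) (q i) - 2 * S * innerP (nuA γ (q i)) (γ (q i)))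
          - (curvA γ (p i) * deriv (curvA γ) (p i) - 2 * S * innerP (nuA γ (p i)) (γ (p i))))
        Filter.atTop (nhds 0)) :
    (∀ s, deriv (curvA γ) s = 0) ∧
      ((¬ ∃ P : ℝ, 0 < P ∧ ∀ s, γ (s + P) = γ s) →
        ∀ s, γ s = γ 0 + s • deriv γ 0) := by
  have hκ' := eq_zero_of_hasDerivAt_sq_of_tendsto
    (hasDerivAt_rotator_quantity hsmooth hunit hrot) hdecay
  have hκ : ∀ s, curvA γ s = curvA γ 0 := fun s =>
    eq_of_hasDerivAt_zero (fun t => hκ' t ▸ hasDerivAt_of_smooth (contDiff_curvA hsmooth) t) s 0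
  refine ⟨hκ', fun hper => eq_line_of_curvA_eq_zero hsmooth hunit fun s => ?_⟩
  by_contra hne
  exact hper (periodic_of_curvA_eq_const hsmooth hunit (hκ s ▸ hne) hκ)
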